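/- Let n ≥ 5 and let G_n be the graph obtained from the anticycle on n vertices by removing the edge {n−2, n}. Then the ordering of the minimal monomial generators of I_{G_n}^2 by decreasing lexicographic order induced by x_n > x_{n−1} > … > x_1 is not a linear quotient ordering of I_{G_n}^2. -/

import Mathlib

/-!
Suppose that `{r, z}` and `{q, p}` are edges of `G`, that `{z, q}` is the only other edge that `G`
may have on these four vertices, and that `q < r < p` and `z < p`. In the decreasing lexicographic
order `(x_q x_p)²` precedes `M = (x_r x_z)(x_q x_p)`, so `x_q x_p` belongs to the colon ideal of
the predecessors of `M` by `M`. If that ideal were generated by variables, it would contain `x_q`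
or `x_p`. But the only products of two edges that can divide `x_q M` or `x_p M` are `M` and
`(x_z x_q)(x_q x_p)`, and the latter comes after `M` because `q < r`. In the anticycle with the
edge `{n-2, n}` removed, `r, z, q, p = n-2, 1, n-3, n` is such a configuration.
-/

open MvPolynomial

noncomputable section

/-- The edge ideal of a finite simple graph on vertex set `Fin n`
(vertex with index `v` corresponds to the vertex `v+1` of `[n]`). -/
def edgeIdeal (K : Type*) [Field K] {n : ℕ} (G : SimpleGraph (Fin n)) :
    Ideal (MvPolynomial (Fin n) K) :=
  Ideal.span {p | ∃ i j : Fin n, G.Adj i j ∧ p = X i * X j}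

/-- `d` is the exponent vector of a minimal monomial generator of `I`. -/
def IsMinGen {K : Type*} [Field K] {n : ℕ} (I : Ideal (MvPolynomial (Fin n) K))
    (d : Fin n →₀ ℕ) : Prop :=
  monomial d (1 : K) ∈ I ∧
    ∀ e : Fin n →₀ ℕ, e ≤ d → e ≠ d → monomial e (1 : K) ∉ I

/-- A list of exponent vectors `L = [d_1, …, d_r]` is a linear quotient ordering if
for every `i ≥ 2` the colon ideal `(x^{d_1}, …, x^{d_{i-1}}) : x^{d_i}` is generated
by a subset of the variables. -/
def IsLinQuotOrder (K : Type*) [Field K] {n : ℕ} (L : List (Fin n →₀ ℕ)) : Prop :=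
  ∀ i : Fin L.length, 0 < i.val →
    ∃ V : Set (Fin n),
      Submodule.colon
        (Ideal.span {m : MvPolynomial (Fin n) K |
          ∃ k : Fin L.length, k.val < i.val ∧ m = monomial (L.get k) 1})
        (Ideal.span {monomial (L.get i) (1 : K)}) =
      Ideal.span ((fun v : Fin n => (X v : MvPolynomial (Fin n) K)) '' V)

/-- A monomial ideal has linear quotients if it is principal or admits a
linear quotient ordering of its minimal monomial generators. -/
def HasLinearQuotients {K : Type*} [Field K] {n : ℕ}
    (I : Ideal (MvPolynomial (Fin n) K)) : Prop :=
  (∃ p, I = Ideal.span {p}) ∨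
    ∃ L : List (Fin n →₀ ℕ), L.Nodup ∧ (∀ d, d ∈ L ↔ IsMinGen I d) ∧ IsLinQuotOrder K L

/-- `lexLt d e` : the monomial `x^d` is lexicographically smaller than `x^e`
for the lexicographic order induced by `x_n > x_{n-1} > … > x_1`. -/
def lexLt {n : ℕ} (d e : Fin n →₀ ℕ) : Prop :=
  ∃ k : Fin n, d k < e k ∧ ∀ m : Fin n, k < m → d m = e m

/-- `L` lists the minimal monomial generators of `I` in decreasing lexicographic order. -/
def LexDecMinGenOrder {K : Type*} [Field K] {n : ℕ} (I : Ideal (MvPolynomial (Fin n) K))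
    (L : List (Fin n →₀ ℕ)) : Prop :=
  List.Pairwise (fun d e => lexLt e d) L ∧ ∀ d, d ∈ L ↔ IsMinGen I d

/-- The anticycle on `[m]` : `{i,j}` is an edge iff `i ≠ j` and `i - j ≢ ±1 (mod m)`. -/
def anticycle (m : ℕ) : SimpleGraph (Fin m) where
  Adj i j := i ≠ j ∧ (i.val + 1) % m ≠ j.val ∧ (j.val + 1) % m ≠ i.val
  symm := ⟨fun i j h => ⟨h.1.symm, h.2.2, h.2.1⟩⟩
  loopless := ⟨fun i h => h.1 rfl⟩

/-- The anticycle on `[m]` regarded as a graph on the vertex set `[n]`. -/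
def anticycleIn (n m : ℕ) : SimpleGraph (Fin n) where
  Adj i j := i ≠ j ∧ i.val < m ∧ j.val < m ∧ (i.val + 1) % m ≠ j.val ∧ (j.val + 1) % m ≠ i.val
  symm := ⟨fun i j h => ⟨h.1.symm, h.2.2.1, h.2.1, h.2.2.2.2, h.2.2.2.1⟩⟩
  loopless := ⟨fun i h => h.1 rfl⟩

/-- The star on `[n]` with edges `{i, n}` for `1 ≤ i ≤ n - 3`
(in the `0`-indexed picture: edges `{i, n-1}` for `i ≤ n - 4`). -/
def starF (n : ℕ) : SimpleGraph (Fin n) :=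
  SimpleGraph.fromRel (fun i j => i.val + 4 ≤ n ∧ j.val = n - 1)

/-- `AgreeOrder n s i j t` : the degree-`s` monomials with ascending (0-indexed)
index sequences `i` and `j` agree in order `t`. -/
def AgreeOrder (n s : ℕ) (i j : ℕ → Fin n) (t : ℕ) : Prop :=
  if t = 0 then j (s - 1) < i (s - 1)
  else (∀ l, s - t ≤ l → l ≤ s - 1 → i l = j l) ∧ i (s - t - 1) ≠ j (s - t - 1)

section MonomialIdeals

open scoped Pointwise

variable {σ R : Type*} [CommSemiring R]

theorem monomial_mem_span_monomial_image_iff [Nontrivial R] {S : Set (σ →₀ ℕ)} {d : σ →₀ ℕ} :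
    monomial d (1 : R) ∈ Ideal.span ((fun s => monomial s (1 : R)) '' S) ↔ ∃ e ∈ S, e ≤ d := by
  classical
  simp [mem_ideal_span_monomial_image, support_monomial]

theorem span_monomial_image_mul (S T : Set (σ →₀ ℕ)) :
    Ideal.span ((fun s => monomial s (1 : R)) '' S) *
        Ideal.span ((fun s => monomial s (1 : R)) '' T) =
      Ideal.span ((fun s => monomial s (1 : R)) '' (S + T)) := by
  rw [Ideal.span_mul_span', ← Set.image2_mul, ← Set.image2_add, Set.image_image2,
    Set.image2_image_left, Set.image2_image_right]
  simp only [monomial_mul, one_mul]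

theorem span_monomial_image_pow (S : Set (σ →₀ ℕ)) (k : ℕ) :
    Ideal.span ((fun s => monomial s (1 : R)) '' S) ^ k =
      Ideal.span ((fun s => monomial s (1 : R)) '' (k • S)) := by
  induction k with
  | zero => simp
  | succ k ih => rw [pow_succ, ih, span_monomial_image_mul, succ_nsmul]

theorem isAntichain_of_degree_eq {S : Set (σ →₀ ℕ)} {k : ℕ} (hS : ∀ d ∈ S, d.degree = k) :
    IsAntichain (· ≤ ·) S := by
  rintro d hd e he hne hle
  obtain ⟨u, rfl⟩ := exists_add_of_le hle
  have hu : u.degree = 0 := by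
    have h := hS _ he
    rw [map_add, hS d hd] at h
    omega
  exact hne (by simp [(Finsupp.degree_eq_zero_iff u).1 hu])

theorem degree_of_mem_nsmul {S : Set (σ →₀ ℕ)} {k : ℕ} (hS : ∀ d ∈ S, d.degree = k) (m : ℕ) :
    ∀ d ∈ m • S, d.degree = m * k := by
  induction m with
  | zero => simp
  | succ m ih =>
    rw [succ_nsmul]
    rintro _ ⟨d, hd, e, he, rfl⟩
    rw [map_add, ih d hd, hS e he, Nat.succ_mul]

theorem isMinGen_span_monomial_image_iff {K : Type*} [Field K] {n : ℕ} {S : Set (Fin n →₀ ℕ)}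
    (hS : IsAntichain (· ≤ ·) S) {d : Fin n →₀ ℕ} :
    IsMinGen (Ideal.span ((fun s => monomial s (1 : K)) '' S)) d ↔ d ∈ S := by
  simp only [IsMinGen, monomial_mem_span_monomial_image_iff]
  constructor
  · rintro ⟨⟨e, he, hed⟩, hmin⟩
    by_contra hd
    exact hmin e hed (ne_of_mem_of_not_mem he hd) ⟨e, he, le_rfl⟩
  · refine fun hd => ⟨⟨d, hd, le_rfl⟩, ?_⟩
    rintro e hed hne ⟨c, hc, hce⟩
    obtain rfl : c = d := hS.eq hc hd (hce.trans hed)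
    exact hne (hed.antisymm hce)

end MonomialIdeals

section EdgeIdeals

open scoped Pointwise

/-- The exponent vector of the monomial `x_i x_j`. -/
def edgeExponent {V : Type*} (i j : V) : V →₀ ℕ :=
  Finsupp.single i 1 + Finsupp.single j 1

/-- The exponent vectors of the generators `x_i x_j` of the edge ideal of `G`, so that
`k • edgeExponents G`, with the pointwise operation on sets, collects the exponent vectors
of the products of `k` edges. -/
def edgeExponents {V : Type*} (G : SimpleGraph V) : Set (V →₀ ℕ) :=
  {d | ∃ i j : V, G.Adj i j ∧ d = edgeExponent i j}

theorem edgeExponent_comm {V : Type*} (i j : V) : edgeExponent i j = edgeExponent j i :=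
  add_comm _ _

theorem edgeExponents_finite {V : Type*} [Finite V] (G : SimpleGraph V) :
    (edgeExponents G).Finite := by
  refine (Set.finite_range fun e : V × V => edgeExponent e.1 e.2).subset ?_
  rintro _ ⟨i, j, -, rfl⟩
  exact ⟨(i, j), rfl⟩

theorem degree_of_mem_edgeExponents {V : Type*} {G : SimpleGraph V} {d : V →₀ ℕ}
    (hd : d ∈ edgeExponents G) : d.degree = 2 := by
  obtain ⟨i, j, -, rfl⟩ := hd
  simp [edgeExponent]

variable {K : Type*} [Field K] {n : ℕ} (G : SimpleGraph (Fin n)) (k : ℕ)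

theorem edgeIdeal_eq_span_monomial_image :
    edgeIdeal K G = Ideal.span ((fun s => monomial s (1 : K)) '' edgeExponents G) := by
  rw [edgeIdeal]
  congr 1
  ext p
  constructor
  · rintro ⟨i, j, hij, rfl⟩
    exact ⟨_, ⟨i, j, hij, rfl⟩, by simp [edgeExponent, X, monomial_mul]⟩
  · rintro ⟨_, ⟨i, j, hij, rfl⟩, rfl⟩
    exact ⟨i, j, hij, by simp [edgeExponent, X, monomial_mul]⟩

variable {G k} in
theorem isMinGen_edgeIdeal_pow_iff {d : Fin n →₀ ℕ} :
    IsMinGen (edgeIdeal K G ^ k) d ↔ d ∈ k • edgeExponents G := by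
  rw [edgeIdeal_eq_span_monomial_image, span_monomial_image_pow, isMinGen_span_monomial_image_iff]
  exact isAntichain_of_degree_eq (degree_of_mem_nsmul (fun _ => degree_of_mem_edgeExponents) k)

theorem finite_setOf_isMinGen_edgeIdeal_pow :
    {d | IsMinGen (edgeIdeal K G ^ k) d}.Finite := by
  simp only [isMinGen_edgeIdeal_pow_iff, Set.ofPred_mem_eq]
  induction k with
  | zero => simp
  | succ k ih => exact succ_nsmul (edgeExponents G) k ▸ ih.add (edgeExponents_finite G)

end EdgeIdeals

section LexOrder

variable {K : Type*} [Field K] {n : ℕ}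

theorem lexLt_iff_toColex_lt {d e : Fin n →₀ ℕ} : lexLt d e ↔ toColex d < toColex e := by
  rw [Finsupp.Colex.lt_iff]
  exact exists_congr fun _ => and_comm

theorem exists_lexDecMinGenOrder {I : Ideal (MvPolynomial (Fin n) K)}
    (hI : {d | IsMinGen I d}.Finite) : ∃ L, LexDecMinGenOrder I L := by
  let S : Finset (Colex (Fin n →₀ ℕ)) := hI.toFinset.map toColex.toEmbedding
  refine ⟨(S.sort (· ≥ ·)).map ofColex, ?_, fun d => ?_⟩
  · simp only [List.pairwise_map, lexLt_iff_toColex_lt, toColex_ofColex]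
    exact S.sortedGT_sort.pairwise
  · simp [S]

theorem IsLinQuotOrder.exists_get_le_single_add {L : List (Fin n →₀ ℕ)} (h : IsLinQuotOrder K L)
    {i k : Fin L.length} (hki : k < i) {u : Fin n →₀ ℕ} (hu : L.get k ≤ u + L.get i) :
    ∃ v ∈ u.support, ∃ l < i, L.get l ≤ Finsupp.single v 1 + L.get i := by
  obtain ⟨V, hV⟩ := h i (Nat.zero_lt_of_lt hki)
  have image_get : {m : MvPolynomial (Fin n) K | ∃ k : Fin L.length, k.val < i.val ∧
      m = monomial (L.get k) 1} = (fun s => monomial s (1 : K)) '' (L.get '' Set.Iio i) := by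
    ext m
    simp [eq_comm]
  have mem_iff (w : Fin n →₀ ℕ) : monomial w (1 : K) ∈ Ideal.span (X '' V) ↔
      ∃ l < i, L.get l ≤ w + L.get i := by
    rw [← hV, image_get, Ideal.mem_colon_span_singleton, monomial_mul, one_mul,
      monomial_mem_span_monomial_image_iff, Set.exists_mem_image]
    rfl
  obtain ⟨v, hv, hvu⟩ := mem_ideal_span_X_image.1 ((mem_iff u).2 ⟨k, hki, hu⟩) u (by simp)
  exact ⟨v, Finsupp.mem_support_iff.2 hvu, (mem_iff _).1 (Ideal.subset_span ⟨v, hv, rfl⟩)⟩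

theorem LexDecMinGenOrder.exists_isMinGen_le_single_add {I : Ideal (MvPolynomial (Fin n) K)}
    {L : List (Fin n →₀ ℕ)} (hL : LexDecMinGenOrder I L) (hlin : IsLinQuotOrder K L)
    {d e u : Fin n →₀ ℕ} (hd : IsMinGen I d) (he : IsMinGen I e) (hde : toColex d < toColex e)
    (hu : e ≤ u + d) :
    ∃ v ∈ u.support, ∃ c, IsMinGen I c ∧ toColex d < toColex c ∧ c ≤ Finsupp.single v 1 + d := by
  have anti : StrictAnti fun i => toColex (L.get i) := fun i j hij =>
    lexLt_iff_toColex_lt.1 (List.pairwise_iff_get.1 hL.1 i j hij)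
  obtain ⟨i, rfl⟩ := List.mem_iff_get.1 ((hL.2 d).2 hd)
  obtain ⟨k, rfl⟩ := List.mem_iff_get.1 ((hL.2 e).2 he)
  obtain ⟨v, hv, l, hli, hle⟩ := hlin.exists_get_le_single_add (anti.lt_iff_gt.1 hde) hu
  exact ⟨v, hv, L.get l, (hL.2 _).1 (L.get_mem l), anti hli, hle⟩

end LexOrder

section FourVertices

open scoped Pointwise

/-- On the vertices `r, z, q, p` the graph `G` has the edges `{r, z}` and `{q, p}` and at most one
more, `{z, q}`: they induce either the path `r, z, q, p` or two disjoint edges. This is the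
configuration that obstructs linear quotients. -/
structure IsInducedPathOrMatching {V : Type*} (G : SimpleGraph V) (r z q p : V) : Prop where
  adj_rz : G.Adj r z
  adj_qp : G.Adj q p
  not_adj_rq : ¬ G.Adj r q
  not_adj_rp : ¬ G.Adj r p
  not_adj_zp : ¬ G.Adj z p

namespace IsInducedPathOrMatching

variable {V : Type*} {G : SimpleGraph V} {r z q p : V} (h : IsInducedPathOrMatching G r z q p)
include h

theorem nodup : [r, z, q, p].Nodup := by
  obtain ⟨hrz, hqp, hrq, hrp, -⟩ := h
  have hrq' : r ≠ q := by
    rintro rfl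
    exact hrp hqp
  have hrp' : r ≠ p := by
    rintro rfl
    exact hrq hqp.symm
  have hzq' : z ≠ q := by
    rintro rfl
    exact hrq hrz
  have hzp' : z ≠ p := by
    rintro rfl
    exact hrp hrz
  simp [hrz.ne, hqp.ne, hrq', hrp', hzq', hzp']

theorem eq_edgeExponent_of_support_subset {d : V →₀ ℕ} (hd : d ∈ edgeExponents G)
    (hsupp : ∀ x ∈ d.support, x ∈ [r, z, q, p]) :
    d = edgeExponent r z ∨ d = edgeExponent z q ∨ d = edgeExponent q p := by
  obtain ⟨i, j, hij, rfl⟩ := hd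
  have hi := hsupp i (by simp [edgeExponent])
  have hj := hsupp j (by simp [edgeExponent])
  obtain ⟨-, -, hrq, hrp, hzp⟩ := h
  grind [edgeExponent_comm, SimpleGraph.adj_comm, SimpleGraph.irrefl]

theorem eq_add_or_eq_add_of_le_single_add {d : V →₀ ℕ} (hd : d ∈ 2 • edgeExponents G) {v : V}
    (hv : v = q ∨ v = p)
    (hle : d ≤ Finsupp.single v 1 + (edgeExponent r z + edgeExponent q p)) :
    d = edgeExponent r z + edgeExponent q p ∨ d = edgeExponent z q + edgeExponent q p := by
  classical
  have hnodup := h.nodup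
  rw [two_nsmul] at hd
  obtain ⟨d₁, hd₁, d₂, hd₂, rfl⟩ := hd
  dsimp only at hle ⊢
  have mem_of_ne_zero (x : V) (hx : (d₁ + d₂) x ≠ 0) : x ∈ [r, z, q, p] := by
    have := hle x
    grind [edgeExponent, Finsupp.add_apply]
  have cases₁ := h.eq_edgeExponent_of_support_subset hd₁ fun x hx =>
    mem_of_ne_zero x (by simp_all)
  have cases₂ := h.eq_edgeExponent_of_support_subset hd₂ fun x hx =>
    mem_of_ne_zero x (by simp_all)
  have eq_or_eq : d₁ = edgeExponent q p ∨ d₂ = edgeExponent q p := by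
    -- otherwise `x_z` would divide both factors, but its exponent in `d₁ + d₂` is at most one
    have hle_z := hle z
    grind [edgeExponent, Finsupp.add_apply]
  have hne : d₁ + d₂ ≠ edgeExponent q p + edgeExponent q p := by
    rintro heq
    rw [heq, ← add_assoc, add_le_add_iff_right] at hle
    have hle_q := hle q
    have hle_p := hle p
    grind [edgeExponent, Finsupp.add_apply]
  rcases eq_or_eq with rfl | rfl
  · rcases cases₂ with rfl | rfl | rfl
    exacts [.inl (add_comm _ _), .inr (add_comm _ _), absurd rfl hne]
  · rcases cases₁ with rfl | rfl | rfl
    exacts [.inl rfl, .inr rfl, absurd rfl hne]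

end IsInducedPathOrMatching

theorem IsInducedPathOrMatching.not_isLinQuotOrder {K : Type*} [Field K] {n : ℕ}
    {G : SimpleGraph (Fin n)} {r z q p : Fin n} (h : IsInducedPathOrMatching G r z q p)
    (hqr : q < r) (hrp : r < p) (hzp : z < p) {L : List (Fin n →₀ ℕ)}
    (hL : LexDecMinGenOrder (edgeIdeal K G ^ 2) L) : ¬ IsLinQuotOrder K L := by
  intro hlin
  have hrz_mem : edgeExponent r z ∈ edgeExponents G := ⟨_, _, h.adj_rz, rfl⟩
  have hqp_mem : edgeExponent q p ∈ edgeExponents G := ⟨_, _, h.adj_qp, rfl⟩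
  have isMinGen_add {d e} (hd : d ∈ edgeExponents G) (he : e ∈ edgeExponents G) :
      IsMinGen (edgeIdeal K G ^ 2) (d + e) :=
    isMinGen_edgeIdeal_pow_iff.2 (two_nsmul (edgeExponents G) ▸ Set.add_mem_add hd he)
  have zq_lt_rz : toColex (edgeExponent z q) < toColex (edgeExponent r z) := by
    rw [edgeExponent_comm r]
    exact add_lt_add_right (Finsupp.Colex.single_lt_iff.2 hqr) (toColex (Finsupp.single z 1))
  have rz_lt_qp : toColex (edgeExponent r z) < toColex (edgeExponent q p) := by
    refine lexLt_iff_toColex_lt.1 ⟨p, ?_, fun m hm => ?_⟩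
    · simp [edgeExponent, hrp.ne, hzp.ne]
    · simp [edgeExponent, hm.ne, (hrp.trans hm).ne, (hzp.trans hm).ne,
        (hqr.trans (hrp.trans hm)).ne]
  obtain ⟨v, hv, c, hc, hlt, hle⟩ := hL.exists_isMinGen_le_single_add hlin
    (isMinGen_add hrz_mem hqp_mem) (isMinGen_add hqp_mem hqp_mem) (add_lt_add_left rz_lt_qp _)
    (u := edgeExponent q p) (by gcongr; exact le_add_self)
  have hv' : v = q ∨ v = p := by
    simpa [edgeExponent, Finsupp.single_apply, eq_comm, or_iff_not_imp_left] using hv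
  rcases h.eq_add_or_eq_add_of_le_single_add (isMinGen_edgeIdeal_pow_iff.1 hc) hv' hle with
    rfl | rfl
  · exact hlt.false
  · exact hlt.asymm (add_lt_add_left zq_lt_rz _)

end FourVertices

section Anticycle

theorem add_one_mod_eq_iff {n i j : ℕ} (hi : i < n) (hj : j < n) :
    (i + 1) % n = j ↔ i + 1 = j ∨ i + 1 = n ∧ j = 0 := by
  rcases (Nat.succ_le_of_lt hi).lt_or_eq with h | h
  · rw [Nat.mod_eq_of_lt h]
    omega
  · rw [← Nat.succ_eq_add_one, h, Nat.mod_self]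
    omega

theorem anticycle_adj_iff {n : ℕ} {i j : Fin n} :
    (anticycle n).Adj i j ↔ i.val ≠ j ∧ i.val + 1 ≠ j ∧ j.val + 1 ≠ i ∧
      ¬ (i.val + 1 = n ∧ j.val = 0) ∧ ¬ (j.val + 1 = n ∧ i.val = 0) := by
  simp only [anticycle, ne_eq, Fin.ext_iff, add_one_mod_eq_iff i.2 j.2, add_one_mod_eq_iff j.2 i.2]
  tauto

theorem isInducedPathOrMatching_deleteEdges_anticycle {n : ℕ} (hn : 5 ≤ n) {r z q p : Fin n}
    (hr : r.val = n - 3) (hz : z.val = 0) (hq : q.val = n - 4) (hp : p.val = n - 1) :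
    IsInducedPathOrMatching ((anticycle n).deleteEdges {s(r, p)}) r z q p := by
  constructor <;>
    simp only [SimpleGraph.deleteEdges_adj, anticycle_adj_iff, Set.mem_singleton_iff, Sym2.eq_iff,
      Fin.ext_iff, not_true_eq_false, and_false, not_false_eq_true] <;>
    omega

end Anticycle

/-- For `n ≥ 5` and `G_n` the anticycle on `[n]` with the edge `{n-2, n}` removed
(0-indexed: `{n-3, n-1}`), the decreasing lexicographic ordering (induced by
`x_n > … > x_1`) of the minimal generators of `I_{G_n}^2` is not a linear quotient
ordering. -/
theorem lex_not_linear_quotient_order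
    (K : Type*) [Field K] (n : ℕ) (hn : 5 ≤ n) :
    ∃ L : List (Fin n →₀ ℕ),
      LexDecMinGenOrder
        ((edgeIdeal K ((anticycle n).deleteEdges
          {s(⟨n - 3, by omega⟩, ⟨n - 1, by omega⟩)})) ^ 2) L ∧
      ¬ IsLinQuotOrder K L := by
  let r : Fin n := ⟨n - 3, by omega⟩
  let z : Fin n := ⟨0, by omega⟩
  let q : Fin n := ⟨n - 4, by omega⟩
  let p : Fin n := ⟨n - 1, by omega⟩
  let G := (anticycle n).deleteEdges {s(r, p)}
  have hG : IsInducedPathOrMatching G r z q p :=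
    isInducedPathOrMatching_deleteEdges_anticycle hn rfl rfl rfl rfl
  have hqr : q < r := Fin.mk_lt_mk.2 (by omega)
  have hrp : r < p := Fin.mk_lt_mk.2 (by omega)
  have hzp : z < p := Fin.mk_lt_mk.2 (by omega)
  obtain ⟨L, hL⟩ := exists_lexDecMinGenOrder (finite_setOf_isMinGen_edgeIdeal_pow (K := K) G 2)
  exact ⟨L, hL, hG.not_isLinQuotOrder hqr hrp hzp hL⟩

end
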